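/- arXiv:2212.08721 — 2 statements merged into one kernel-verified Lean document; each statement's English description precedes it below -/
import Mathlib

section
/- Let R be a monotone transit function on a finite nonempty set V. Then the following are equivalent: (i) R satisfies (tb); (ii) R satisfies (hc); (iii) R satisfies (tb'); (iv) the system of transit sets 𝒞_R is totally balanced (contains no weak β-cycle). -/
namespace TransitPaper

variable {V : Type*}

/-- Transit function axioms (t1), (t2), (t3). -/
def IsTransit (R : V → V → Set V) : Prop :=
  (∀ u v, u ∈ R u v) ∧ (∀ u v, R u v = R v u) ∧ (∀ u : V, R u u = {u})

/-- Monotonicity axiom (m). -/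
def IsMonotone (R : V → V → Set V) : Prop :=
  ∀ u v p q, p ∈ R u v → q ∈ R u v → R p q ⊆ R u v

/-- Two sets overlap: A ∩ B, A \ B, B \ A all nonempty. -/
def Ovl (A B : Set V) : Prop :=
  (A ∩ B).Nonempty ∧ (A \ B).Nonempty ∧ (B \ A).Nonempty

/-- The system of transit sets 𝒞_R. -/
def transitSets (R : V → V → Set V) : Set (Set V) :=
  {S | ∃ x y, S = R x y}

/-- S is an interval with respect to the order `lt`. -/
def IsIntervalWrt (lt : V → V → Prop) (S : Set V) : Prop :=
  ∀ x ∈ S, ∀ y ∈ S, ∀ w, lt x w → lt w y → w ∈ S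

/-- R is pyramidal: monotone and there is a total order making all transit sets intervals. -/
def IsPyramidal (R : V → V → Set V) : Prop :=
  IsMonotone R ∧ ∃ lt : V → V → Prop, IsStrictTotalOrder V lt ∧
    ∀ u v, IsIntervalWrt lt (R u v)

def AxUC (R : V → V → Set V) : Prop :=
  ∀ x y u v : V, (R x y ∩ R u v).Nonempty →
    ∃ p ∈ R x y ∪ R u v, ∃ q ∈ R x y ∪ R u v, R x y ∪ R u v = R p q

def AxU (R : V → V → Set V) : Prop :=
  ∀ u v z : V, z ∈ R u v → R u v = R u z ∪ R z v

def AxW (R : V → V → Set V) : Prop :=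
  ∀ x y z : V, z ∈ R x y ∨ y ∈ R x z ∨ x ∈ R y z

def AxWP (R : V → V → Set V) : Prop :=
  ∀ u v x y p q : V, (R u v ∩ R x y).Nonempty → (R u v ∩ R p q).Nonempty →
    (R x y ∩ R p q).Nonempty →
    R p q ⊆ R u v ∪ R x y ∨ R u v ⊆ R p q ∪ R x y ∨ R x y ⊆ R p q ∪ R u v

def AxI (R : V → V → Set V) : Prop :=
  ∀ x y u v p q : V, (R x y ∩ R u v).Nonempty → R x y ∩ R u v ⊆ R p q →
    (R p q \ (R x y ∪ R u v)).Nonempty → R x y ⊆ R p q ∨ R u v ⊆ R p q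

def AxO' (R : V → V → Set V) : Prop :=
  ∀ u v : V, ∀ z ∈ R u v, ∃ p ∈ R u v, ∃ q ∈ R u v, R p z ∪ R z q = R u v

def AxL1 (R : V → V → Set V) : Prop :=
  ∀ x y p q u v : V, Ovl (R x y) (R p q) → Ovl (R p q) (R u v) →
    R x y ⊆ R u v ∨ R u v ⊆ R x y ∨
      (R x y ∩ R u v ⊆ R p q ∧ R p q ⊆ R x y ∪ R u v)

def AxL2 (R : V → V → Set V) : Prop :=
  ∀ x y p q u v : V, Ovl (R x y) (R p q) → Ovl (R p q) (R u v) →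
    R x y ∩ R u v = ∅ →
    ∃ s ∈ R x y \ R p q, ∃ t ∈ R u v \ R p q,
      R x y ∪ R p q ∪ R u v = R s t

def AxN3O (R : V → V → Set V) : Prop :=
  ∀ x y p q u v : V, Ovl (R x y) (R p q) → Ovl (R p q) (R u v) →
    R x y ⊆ R u v ∨ R u v ⊆ R x y ∨ R x y ∩ R u v = ∅

def AxU3 (R : V → V → Set V) : Prop :=
  ∀ x y : V, ¬ R x y ⊆ {x, y} →
    ∃ z ∈ R x y, z ≠ x ∧ z ≠ y ∧ R x z ∪ R z y = R x y

def AxB3 (R : V → V → Set V) : Prop :=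
  ∀ u v x y : V, x ∈ R u v → y ∈ R u x → x ∈ R y v

def AxB4 (R : V → V → Set V) : Prop :=
  ∀ u v x : V, x ∈ R u v → R u x ∩ R x v = {x}

def AxTB (R : V → V → Set V) : Prop :=
  ∀ W : Finset V, 3 ≤ W.card →
    ∃ x ∈ W, ∀ u ∈ W, ∀ v ∈ W, R x u ⊆ R x v ∨ R x v ⊆ R x u

def AxHC (R : V → V → Set V) : Prop :=
  ∀ W : Finset V, 3 ≤ W.card →
    ∃ x ∈ W, ∃ y ∈ W, x ≠ y ∧
      ∀ u ∈ W, ∀ v ∈ W,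
        (R x u ⊆ R x v ∨ R x v ⊆ R x u) ∧ (R y u ⊆ R y v ∨ R y v ⊆ R y u)

def AxTB' (R : V → V → Set V) : Prop :=
  ∀ n : ℕ, 3 ≤ n → ∀ v : ZMod n → V,
    (∀ k : ZMod n, v (k - 1) ∉ R (v k) (v (k + 1)) ∧
      v (k + 1) ∉ R (v (k - 1)) (v k)) →
    ∃ j i : ZMod n, i ≠ j ∧ i ≠ j - 1 ∧ v j ∈ R (v i) (v (i + 1))

def AxP2 (R : V → V → Set V) : Prop :=
  ∀ x y u v p q s t : V,
    Ovl (R x y) (R s t) → Ovl (R u v) (R s t) → Ovl (R p q) (R s t) →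
    R x y ⊆ R u v ∪ R p q ∪ R s t ∨ R u v ⊆ R x y ∪ R p q ∪ R s t ∨
      R p q ⊆ R x y ∪ R u v ∪ R s t

def AxP3 (R : V → V → Set V) : Prop :=
  ∀ x y u v p q s t : V,
    Ovl (R x y) (R u v) → Ovl (R x y) (R p q) → Ovl (R x y) (R s t) →
    R p q ⊆ R u v → R s t ⊆ R u v → (R p q ∩ R s t).Nonempty

def AxP4 (R : V → V → Set V) : Prop :=
  ∀ n : ℕ, 3 ≤ n → ∀ (u v y : V) (x : ℕ → V),
    (∀ i j : ℕ, 1 ≤ i → i ≤ n → 1 ≤ j → j + 1 ≤ n → j ≠ i - 1 → j ≠ i →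
      x i ∉ R (x j) (x (j + 1))) →
    (R u v ∩ R (x 1) (x 2)).Nonempty →
    (R u v ∩ R (x (n - 1)) (x n)).Nonempty →
    (∀ i : ℕ, 1 ≤ i → i + 1 ≤ n → y ∈ R u v \ R (x i) (x (i + 1))) →
    R (x 1) (x 2) ⊆ R u v ∨ R (x (n - 1)) (x n) ⊆ R u v

/-- A weak β-cycle in a set system 𝒞. -/
def HasWeakBetaCycle (𝒞 : Set (Set V)) : Prop :=
  ∃ n : ℕ, 3 ≤ n ∧ ∃ (C : ZMod n → Set V) (x : ZMod n → V),
    (∀ i, C i ∈ 𝒞) ∧ (∀ i, x i ∈ C i ∧ x i ∈ C (i + 1)) ∧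
    (∀ i k : ZMod n, k ≠ i → k ≠ i + 1 → x i ∉ C k)

def TotallyBalanced (𝒞 : Set (Set V)) : Prop := ¬ HasWeakBetaCycle 𝒞

/-- A pure cycle: a weak β-cycle with nonconsecutive sets disjoint. -/
def HasPureCycle (𝒞 : Set (Set V)) : Prop :=
  ∃ n : ℕ, 3 ≤ n ∧ ∃ (C : ZMod n → Set V) (x : ZMod n → V),
    (∀ i, C i ∈ 𝒞) ∧ (∀ i, x i ∈ C i ∧ x i ∈ C (i + 1)) ∧
    (∀ i k : ZMod n, k ≠ i → k ≠ i + 1 → x i ∉ C k) ∧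
    (∀ i j : ZMod n, j ≠ i - 1 → j ≠ i → j ≠ i + 1 → C i ∩ C j = ∅)

def HasGammaTriangle (𝒞 : Set (Set V)) : Prop :=
  ∃ C₁ C₂ C₃ : Set V, C₁ ∈ 𝒞 ∧ C₂ ∈ 𝒞 ∧ C₃ ∈ 𝒞 ∧
    (C₁ ∩ C₂).Nonempty ∧ (C₁ ∩ C₃).Nonempty ∧ (C₂ ∩ C₃).Nonempty ∧
    ∃ u ∈ C₃, ∃ w ∈ C₃, u ∈ C₁ \ C₂ ∧ w ∈ C₂ \ C₁

def GammaAcyclic (𝒞 : Set (Set V)) : Prop :=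
  ¬ HasPureCycle 𝒞 ∧ ¬ HasGammaTriangle 𝒞

def IsHierarchy (𝒞 : Set (Set V)) : Prop :=
  Set.univ ∈ 𝒞 ∧ (∀ x : V, {x} ∈ 𝒞) ∧
    ∀ A ∈ 𝒞, ∀ B ∈ 𝒞, A ∩ B = A ∨ A ∩ B = B ∨ A ∩ B = ∅

def WeakHierarchy (𝒞 : Set (Set V)) : Prop :=
  ∀ A ∈ 𝒞, ∀ B ∈ 𝒞, ∀ C ∈ 𝒞,
    A ∩ B ∩ C = A ∩ B ∨ A ∩ B ∩ C = A ∩ C ∨ A ∩ B ∩ C = B ∩ C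

def AxWPSet (𝒞 : Set (Set V)) : Prop :=
  ∀ A ∈ 𝒞, ∀ B ∈ 𝒞, ∀ C ∈ 𝒞,
    (A ∩ B).Nonempty → (A ∩ C).Nonempty → (B ∩ C).Nonempty →
    A ⊆ B ∪ C ∨ B ⊆ A ∪ C ∨ C ⊆ A ∪ B

def AxISet (𝒞 : Set (Set V)) : Prop :=
  ∀ A ∈ 𝒞, ∀ B ∈ 𝒞, ∀ C ∈ 𝒞,
    (A ∩ B).Nonempty → A ∩ B ⊆ C → (C \ (A ∪ B)).Nonempty →
    A ⊆ C ∨ B ⊆ C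

def AxL1Set (𝒞 : Set (Set V)) : Prop :=
  ∀ A ∈ 𝒞, ∀ B ∈ 𝒞, ∀ C ∈ 𝒞, Ovl A B → Ovl B C →
    A ⊆ C ∨ C ⊆ A ∨ (A ∩ C ⊆ B ∧ B ⊆ A ∪ C)

def AxN3OSet (𝒞 : Set (Set V)) : Prop :=
  ∀ A ∈ 𝒞, ∀ B ∈ 𝒞, ∀ C ∈ 𝒞, Ovl A B → Ovl B C → ¬ Ovl A C

def AxL2'Set (𝒞 : Set (Set V)) : Prop :=
  ∀ A ∈ 𝒞, ∀ B ∈ 𝒞, ∀ C ∈ 𝒞, Ovl A B → Ovl B C → A ∩ C = ∅ →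
    A ∪ B ∪ C ∈ 𝒞

def AxL2''Set (𝒞 : Set (Set V)) : Prop :=
  ∀ A ∈ 𝒞, ∀ B ∈ 𝒞, ∀ C ∈ 𝒞, ∀ D ∈ 𝒞, Ovl A B → Ovl B C → A ∩ C = ∅ →
    (A ∪ C) \ B ⊆ D → A ∪ B ∪ C ⊆ D

/-!
The equivalence of (tb') with total balancedness is immediate from monotonicity: in a weak β-cycle
the set `C (i + 1)` may be replaced by the smaller transit set `R (x i) (x (i + 1))`. The vertices
of a cycle violating (tb') form a set `W` violating (tb), since at each of them the transit sets to
the two neighbours are incomparable, and (hc) trivially implies (tb).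

The substance is (tb') ⇒ (hc). Call `x ∈ W` *simple in `W`* if the traces on `W` of the sets
`R x u`, `u ∈ W`, form a chain. As in Dirac's theorem on simplicial vertices of chordal graphs, one
proves more: if `E` is a proper subset of the finite set `W` that is convex in `W`, then some simple
vertex of `W` lies outside `E`. Using this with `E = ∅` and then with `E = {x}` yields two simple
vertices.

The proof is by induction on `|W|`. Enlarge `E` to a maximal proper convex subset, and call `u`, `v`
adjacent if `R u v` does not contain `W`. Every finite nonempty `Z` is contained in `R x y` for some
`x, y ∈ Z`; for `Z = E` this shows that each `b ∈ W \ E` has a non-neighbour in `E`. Choose `b` so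
that its set `S` of neighbours in `E` is maximal, and let `B` be the component of `b` in the graph
induced on `W \ E`. If some vertex of `B` had a neighbour in `E` outside `S`, a chordless path
through `B` joining two vertices of `E` would close to a cycle violating (tb'). Hence `B ∪ S` is a
proper subset of `W` in which `S` is convex, and induction gives a vertex `x` of `B` that is simple
in `B ∪ S`. Since `W ⊆ R x z` for all `z ∈ W \ (B ∪ S)`, it is simple in `W` as well.
-/

variable {R : V → V → Set V}

lemma IsTransit.left_mem (htf : IsTransit R) (u v : V) : u ∈ R u v := htf.1 u v

lemma IsTransit.symm (htf : IsTransit R) (u v : V) : R u v = R v u := htf.2.1 u v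

lemma IsTransit.self_eq (htf : IsTransit R) (u : V) : R u u = {u} := htf.2.2 u

lemma IsTransit.right_mem (htf : IsTransit R) (u v : V) : v ∈ R u v :=
  htf.symm v u ▸ htf.left_mem v u

lemma IsMonotone.subset_left (hm : IsMonotone R) (htf : IsTransit R) {u v x : V}
    (hx : x ∈ R u v) : R u x ⊆ R u v :=
  hm u v u x (htf.left_mem u v) hx

lemma IsMonotone.subset_right (hm : IsMonotone R) (htf : IsTransit R) {u v x : V}
    (hx : x ∈ R u v) : R x v ⊆ R u v :=
  hm u v x v hx (htf.right_mem u v)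

/-! ### Cycles and covering pairs -/

-- The premise of (tb') is the case of neighbours on the cycle of the negated conclusion.
lemma AxTB'.exists_mem (h : AxTB' R) {n : ℕ} (hn : 3 ≤ n) (v : ZMod n → V) :
    ∃ j i : ZMod n, i ≠ j ∧ i ≠ j - 1 ∧ v j ∈ R (v i) (v (i + 1)) := by
  have : Fact (1 < n) := ⟨by omega⟩
  have : Fact (2 < n) := ⟨hn⟩
  have one_ne : (1 : ZMod n) ≠ 0 := one_ne_zero
  have two_ne : (2 : ZMod n) ≠ 0 := fun e ↦ ZMod.neg_one_ne_one (n := n) (by grind)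
  by_contra! hc
  have hlocal (k : ZMod n) :
      v (k - 1) ∉ R (v k) (v (k + 1)) ∧ v (k + 1) ∉ R (v (k - 1)) (v k) := by
    constructor
    · exact hc (k - 1) k (fun e ↦ one_ne (by linear_combination e))
        (fun e ↦ two_ne (by linear_combination e))
    · simpa only [sub_add_cancel] using hc (k + 1) (k - 1)
        (fun e ↦ two_ne (by linear_combination -e)) (fun e ↦ one_ne (by linear_combination -e))
  obtain ⟨j, i, hij, hij', hmem⟩ := h n hn v hlocal
  exact hc j i hij hij' hmem

lemma AxTB'.exists_mem_of_seq (h : AxTB' R) (htf : IsTransit R) {m : ℕ} (htwo : 2 ≤ m)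
    (v : ℕ → V) :
    (∃ i < m, ∃ j ≤ m, j ≠ i ∧ j ≠ i + 1 ∧ v j ∈ R (v i) (v (i + 1))) ∨
      ∃ j, 0 < j ∧ j < m ∧ v j ∈ R (v 0) (v m) := by
  obtain ⟨j, i, hij, hij', hmem⟩ := h.exists_mem (n := m + 1) (by omega) fun k ↦ v k.val
  have hj : j.val < m + 1 := j.val_lt
  have hi : i.val < m + 1 := i.val_lt
  have hne : j.val ≠ i.val := fun e ↦ hij (ZMod.val_injective _ e).symm
  have hne' : j.val ≠ (i + 1).val :=
    fun e ↦ hij' (eq_sub_of_add_eq (ZMod.val_injective _ e).symm)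
  rcases (Nat.lt_succ_iff.1 hi).lt_or_eq with hi' | hi'
  · have hsucc : (i + 1).val = i.val + 1 := by
      have hone : (1 : ZMod (m + 1)).val = 1 := ZMod.val_one'' (by omega)
      rw [ZMod.val_add_of_lt (by omega), hone]
    rw [hsucc] at hmem hne'
    exact .inl ⟨i.val, hi', j.val, by omega, hne, hne', hmem⟩
  · have hsucc : (i + 1).val = 0 := by
      rw [ZMod.val_eq_zero, ← ZMod.natCast_zmod_val i, hi']
      exact_mod_cast ZMod.natCast_self (m + 1)
    rw [hsucc, hi', htf.symm] at hmem
    rw [hsucc] at hne'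
    exact .inr ⟨j.val, by omega, by omega, hmem⟩

lemma AxTB'.triangle (h : AxTB' R) (htf : IsTransit R) (x y z : V) :
    z ∈ R x y ∨ x ∈ R y z ∨ y ∈ R x z := by
  rcases h.exists_mem_of_seq htf le_rfl (fun t ↦ if t = 0 then x else if t = 1 then y else z)
    with ⟨i, hi, j, hj, hji, hji', hmem⟩ | ⟨j, hj, hj', hmem⟩
  · obtain ⟨rfl, rfl⟩ | ⟨rfl, rfl⟩ : (i = 0 ∧ j = 2) ∨ (i = 1 ∧ j = 0) := by omega
    · exact .inl (by simpa using hmem)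
    · exact .inr (.inl (by simpa using hmem))
  · obtain rfl : j = 1 := by omega
    exact .inr (.inr (by simpa using hmem))

lemma AxTB'.exists_subset (h : AxTB' R) (htf : IsTransit R) (hm : IsMonotone R) {Z : Set V}
    (hfin : Z.Finite) (hZ : Z.Nonempty) : ∃ x ∈ Z, ∃ y ∈ Z, Z ⊆ R x y := by
  lift Z to Finset V using hfin
  induction hZ using Finset.Nonempty.cons_induction with
  | singleton a => exact ⟨a, by simp, a, by simp, by simpa using htf.left_mem a a⟩
  | cons w Z _ _ ih =>
    obtain ⟨x, hx, y, hy, hZ⟩ := ih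
    simp only [Finset.coe_cons, Set.insert_subset_iff]
    rcases h.triangle htf x y w with hw | hxyw | hyxw
    · exact ⟨x, .inr hx, y, .inr hy, hw, hZ⟩
    · exact ⟨y, .inr hy, w, .inl rfl, htf.right_mem y w,
        hZ.trans (htf.symm x y ▸ hm.subset_left htf hxyw)⟩
    · exact ⟨x, .inr hx, w, .inl rfl, htf.right_mem x w, hZ.trans (hm.subset_left htf hyxw)⟩

/-! ### Chordless paths -/

section ChordlessPath

variable {G : SimpleGraph V} {s : Set V} {u v : V}

lemma adj_spanningCoe_induce :
    (G.induce s).spanningCoe.Adj u v ↔ u ∈ s ∧ v ∈ s ∧ G.Adj u v := by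
  simp only [SimpleGraph.map_adj, SimpleGraph.comap_adj, Function.Embedding.subtype_apply,
    Subtype.exists]
  grind

lemma mem_of_reachable_spanningCoe_induce (hu : u ∈ s)
    (huv : (G.induce s).spanningCoe.Reachable u v) : v ∈ s := by
  obtain ⟨p⟩ := huv
  induction p with
  | nil => exact hu
  | cons huw _ ih => exact ih (adj_spanningCoe_induce.1 huw).2.1

lemma exists_isPath_forall_adj_getVert (huv : G.Reachable u v) :
    ∃ p : G.Walk u v, p.IsPath ∧ ∀ i j, i < j → j ≤ p.length →
      G.Adj (p.getVert i) (p.getVert j) → j = i + 1 := by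
  obtain ⟨p, hp, hlen⟩ := huv.exists_path_of_dist
  refine ⟨p, hp, fun i j hij hj hadj ↦ ?_⟩
  have hshort := G.dist_le (((p.take i).concat hadj).append (p.drop j))
  simp only [SimpleGraph.Walk.length_append, SimpleGraph.Walk.length_concat,
    SimpleGraph.Walk.take_length, SimpleGraph.Walk.drop_length] at hshort
  omega

lemma reachable_deleteEdges_of_adj_of_reachable {a c : V} (ha : a ∉ s) (hc : c ∉ s) (hu : u ∈ s)
    (huv : (G.induce s).spanningCoe.Reachable u v) (hau : G.Adj a u) (hvc : G.Adj v c) :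
    ((G.induce (insert a (insert c s))).spanningCoe.deleteEdges {s(a, c)}).Reachable a c := by
  have hv : v ∈ s := mem_of_reachable_spanningCoe_induce hu huv
  set K := (G.induce (insert a (insert c s))).spanningCoe.deleteEdges {s(a, c)}
  have hK {x y : V} (hx : x ∈ insert a (insert c s)) (hy : y ∈ insert a (insert c s))
      (hxy : G.Adj x y) (hs : x ∈ s ∨ y ∈ s) : K.Adj x y := by
    rw [SimpleGraph.deleteEdges_adj, adj_spanningCoe_induce, Set.mem_singleton_iff]
    refine ⟨⟨hx, hy, hxy⟩, fun he ↦ ?_⟩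
    rcases Sym2.eq_iff.1 he with ⟨rfl, rfl⟩ | ⟨rfl, rfl⟩ <;> tauto
  have hle : (G.induce s).spanningCoe ≤ K := fun x y hxy ↦ by
    obtain ⟨hx, hy, hadj⟩ := adj_spanningCoe_induce.1 hxy
    exact hK (.inr (.inr hx)) (.inr (.inr hy)) hadj (.inl hx)
  have hau' : K.Adj a u := hK (.inl rfl) (.inr (.inr hu)) hau (.inr hu)
  have hvc' : K.Adj v c := hK (.inr (.inr hv)) (.inr (.inl rfl)) hvc (.inl hv)
  exact hau'.reachable.trans ((huv.mono hle).trans hvc'.reachable)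

-- The path is a shortest one in the subgraph from which the possible edge `a c` is deleted.
lemma exists_chordless_seq {a c : V} (hac : a ≠ c) (ha : a ∉ s) (hc : c ∉ s) (hu : u ∈ s)
    (huv : (G.induce s).spanningCoe.Reachable u v) (hau : G.Adj a u) (hvc : G.Adj v c) :
    ∃ n, 2 ≤ n ∧ ∃ p : ℕ → V, p 0 = a ∧ p n = c ∧ Set.InjOn p {i | i ≤ n} ∧
      (∀ i, 0 < i → i < n → p i ∈ s) ∧ (∀ i < n, G.Adj (p i) (p (i + 1))) ∧
      ∀ i j, i < j → j ≤ n → G.Adj (p i) (p j) → j = i + 1 ∨ (i = 0 ∧ j = n) := by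
  let K := (G.induce (insert a (insert c s))).spanningCoe.deleteEdges {s(a, c)}
  have hK {x y : V} : K.Adj x y ↔ (x ∈ insert a (insert c s) ∧ y ∈ insert a (insert c s) ∧
      G.Adj x y) ∧ s(x, y) ≠ s(a, c) := by
    rw [SimpleGraph.deleteEdges_adj, adj_spanningCoe_induce, Set.mem_singleton_iff]
  have hreach : K.Reachable a c := reachable_deleteEdges_of_adj_of_reachable ha hc hu huv hau hvc
  obtain ⟨p, hp, hchord⟩ := exists_isPath_forall_adj_getVert hreach
  have hlen : 2 ≤ p.length :=
    (hreach.one_lt_dist_of_ne_of_not_adj hac fun hadj ↦ (hK.1 hadj).2 rfl).trans_le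
      (K.dist_le p)
  have hinj := hp.getVert_injOn
  have hadj (i : ℕ) (hi : i < p.length) := hK.1 (p.adj_getVert_succ hi)
  have hmem (i : ℕ) (hi : i ≤ p.length) : p.getVert i ∈ insert a (insert c s) := by
    rcases hi.lt_or_eq with hi | rfl
    · exact (hadj i hi).1.1
    · simp
  have hzero (i : ℕ) (hi : i ≤ p.length) (e : p.getVert i = a) : i = 0 :=
    hinj hi (Nat.zero_le _) (e.trans p.getVert_zero.symm)
  have hlast (i : ℕ) (hi : i ≤ p.length) (e : p.getVert i = c) : i = p.length :=
    hinj hi (Set.mem_ofPred.2 le_rfl) (e.trans p.getVert_length.symm)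
  refine ⟨p.length, hlen, p.getVert, p.getVert_zero, p.getVert_length, hinj,
    fun i hi hi' ↦ ?_, fun i hi ↦ (hadj i hi).1.2.2, fun i j hij hj hG ↦ ?_⟩
  · rcases hmem i hi'.le with e | e | hs
    · exact absurd (hzero i hi'.le e) hi.ne'
    · exact absurd (hlast i hi'.le e) hi'.ne
    · exact hs
  · by_cases he : s(p.getVert i, p.getVert j) = s(a, c)
    · rcases Sym2.eq_iff.1 he with ⟨hia, hjc⟩ | ⟨hic, -⟩
      · exact .inr ⟨hzero i (by omega) hia, hlast j hj hjc⟩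
      · have hi : i = p.length := hlast i (by omega) hic
        omega
    · exact .inl (hchord i j hij hj (hK.2 ⟨⟨hmem i (by omega), hmem j hj, hG⟩, he⟩))

end ChordlessPath

/-! ### The non-covering graph -/

/-- The graph joining distinct `u` and `v` when `R u v` does not contain `W`, used only on `W`.
Under (tb') it plays the role of the chordal graph in Dirac's theorem. -/
def nonCoverGraph (R : V → V → Set V) (W : Set V) : SimpleGraph V :=
  SimpleGraph.fromRel fun u v ↦ ¬ W ⊆ R u v

variable {W E : Set V}

lemma nonCoverGraph_adj (htf : IsTransit R) {u v : V} :
    (nonCoverGraph R W).Adj u v ↔ u ≠ v ∧ ¬ W ⊆ R u v := by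
  rw [nonCoverGraph, SimpleGraph.fromRel_adj, htf.symm v u, or_self]

lemma nonCoverGraph_adj_of_mem (htf : IsTransit R) (hm : IsMonotone R) {u v x : V}
    (huv : (nonCoverGraph R W).Adj u v) (hx : x ∈ R u v) (hxu : x ≠ u) (hxv : x ≠ v) :
    (nonCoverGraph R W).Adj u x ∧ (nonCoverGraph R W).Adj x v := by
  simp only [nonCoverGraph_adj htf] at huv ⊢
  exact ⟨⟨hxu.symm, fun hW ↦ huv.2 (hW.trans (hm.subset_left htf hx))⟩,
    hxv, fun hW ↦ huv.2 (hW.trans (hm.subset_right htf hx))⟩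

-- Otherwise a chordless path from `a` to `c` through `s` closes to a cycle excluded by (tb').
lemma AxTB'.nonCoverGraph_adj_of_reachable (h : AxTB' R) (htf : IsTransit R) (hm : IsMonotone R)
    {s : Set V} {a c u v : V} (hdisj : Disjoint (R a c) s) (hu : u ∈ s)
    (huv : ((nonCoverGraph R W).induce s).spanningCoe.Reachable u v)
    (hau : (nonCoverGraph R W).Adj a u) (hvc : (nonCoverGraph R W).Adj v c)
    (hunique : ∀ x ∈ s, (nonCoverGraph R W).Adj x c → x = v) : (nonCoverGraph R W).Adj a v := by
  rcases eq_or_ne a c with rfl | hac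
  · exact hvc.symm
  obtain ⟨n, hn, p, hp0, hpn, hinj, hps, hadj, hchord⟩ := exists_chordless_seq hac
    (hdisj.notMem_of_mem_left (htf.left_mem a c)) (hdisj.notMem_of_mem_left (htf.right_mem a c))
    hu huv hau hvc
  have adj_of_triangle {i j k : ℕ} (hij : i < j) (hjk : j < k) (hk : k ≤ n)
      (aij : (nonCoverGraph R W).Adj (p i) (p j)) (ajk : (nonCoverGraph R W).Adj (p j) (p k))
      (aik : (nonCoverGraph R W).Adj (p i) (p k)) : (nonCoverGraph R W).Adj a v := by
    obtain ⟨rfl, rfl, rfl⟩ : i = 0 ∧ j = 1 ∧ n = 2 := by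
      have := hchord i j hij (by omega) aij
      have := hchord j k hjk hk ajk
      have := hchord i k (by omega) hk aik
      omega
    have hv : p 1 = v := hunique (p 1) (hps 1 (by omega) (by omega)) (hpn ▸ hadj 1 (by omega))
    exact hv ▸ hp0 ▸ aij
  rcases h.exists_mem_of_seq htf hn p with ⟨i, hi, j, hj, hji, hji', hmem⟩ | ⟨j, hj, hjn, hmem⟩
  · obtain ⟨aij, aji⟩ := nonCoverGraph_adj_of_mem htf hm (hadj i hi) hmem
      (hinj.ne hj (Set.mem_ofPred.2 hi.le) hji) (hinj.ne hj (Set.mem_ofPred.2 hi) hji')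
    rcases lt_or_gt_of_ne hji with hlt | hgt
    · exact adj_of_triangle hlt (Nat.lt_succ_self i) hi aij.symm (hadj i hi) aji
    · exact adj_of_triangle (Nat.lt_succ_self i) (by omega) hj (hadj i hi) aji.symm aij
  · rw [hp0, hpn] at hmem
    exact absurd (hps j hj hjn) (hdisj.notMem_of_mem_left hmem)

/-! ### Simple vertices -/

/-- `E` is a proper subset of `W` containing every element of `W` that lies between two elements
of `E`. -/
def IsProperConvexIn (R : V → V → Set V) (W E : Set V) : Prop :=
  E ⊂ W ∧ ∀ p ∈ E, ∀ q ∈ E, R p q ∩ W ⊆ E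

/-- `x` is simple in `W`: the traces on `W` of the transit sets `R x u`, `u ∈ W`, form a chain. This
is stated through membership, which is equivalent for monotone transit functions. -/
def IsSimpleIn (R : V → V → Set V) (W : Set V) (x : V) : Prop :=
  ∀ u ∈ W, ∀ v ∈ W, u ∈ R x v ∨ v ∈ R x u

lemma IsSimpleIn.subset_or_subset (htf : IsTransit R) (hm : IsMonotone R) {x u v : V}
    (hx : IsSimpleIn R W x) (hu : u ∈ W) (hv : v ∈ W) : R x u ⊆ R x v ∨ R x v ⊆ R x u :=
  (hx u hu v hv).imp (hm.subset_left htf) (hm.subset_left htf)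

lemma IsSimpleIn.of_subset {W' : Set V} {x : V} (hx : IsSimpleIn R W' x)
    (hcover : ∀ z ∈ W \ W', W ⊆ R x z) : IsSimpleIn R W x := by
  intro u hu v hv
  by_cases hu' : u ∈ W'
  · by_cases hv' : v ∈ W'
    · exact hx u hu' v hv'
    · exact .inl (hcover v ⟨hv, hv'⟩ hu)
  · exact .inr (hcover u ⟨hu, hu'⟩ hv)

lemma subset_of_maximal_isProperConvexIn (hm : IsMonotone R)
    (hE : Maximal (IsProperConvexIn R W) E) {b x y : V} (hb : b ∈ W \ E) (hEsub : E ⊆ R x y)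
    (hbmem : b ∈ R x y) : W ⊆ R x y := by
  by_contra hW
  have hconvex : IsProperConvexIn R W (R x y ∩ W) :=
    ⟨⟨Set.inter_subset_right, fun hsub ↦ hW fun w hw ↦ (hsub hw).1⟩,
      fun p hp q hq ↦ Set.inter_subset_inter_left W (hm x y p q hp.1 hq.1)⟩
  exact hb.2 (hE.2 hconvex (Set.subset_inter hEsub hE.1.1.1) ⟨hbmem, hb.1⟩)

lemma AxTB'.exists_cover_of_maximal (h : AxTB' R) (htf : IsTransit R) (hm : IsMonotone R)
    (hfin : E.Finite) (hne : E.Nonempty) (hE : Maximal (IsProperConvexIn R W) E) {b : V}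
    (hb : b ∈ W \ E) : ∃ e ∈ E, W ⊆ R b e := by
  obtain ⟨x, hx, y, hy, hxy⟩ := h.exists_subset htf hm hfin hne
  rcases h.triangle htf x y b with hbxy | hxyb | hyxb
  · exact absurd (hE.1.2 x hx y hy ⟨hbxy, hb.1⟩) hb.2
  · refine ⟨y, hy, subset_of_maximal_isProperConvexIn hm hE hb (hxy.trans ?_) (htf.left_mem b y)⟩
    rw [htf.symm x y, htf.symm b y]
    exact hm.subset_left htf hxyb
  · refine ⟨x, hx, subset_of_maximal_isProperConvexIn hm hE hb (hxy.trans ?_) (htf.left_mem b x)⟩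
    rw [htf.symm b x]
    exact hm.subset_left htf hyxb

lemma AxTB'.neighborSet_inter_subset (h : AxTB' R) (htf : IsTransit R) (hm : IsMonotone R)
    (hE : IsProperConvexIn R W E) {b c : V}
    (hb : MaximalFor (· ∈ W \ E) (fun x ↦ (nonCoverGraph R W).neighborSet x ∩ E) b)
    (hbc : ((nonCoverGraph R W).induce (W \ E)).spanningCoe.Reachable b c) :
    (nonCoverGraph R W).neighborSet c ∩ E ⊆ (nonCoverGraph R W).neighborSet b ∩ E := by
  set G := nonCoverGraph R W
  set N : V → Set V := fun x ↦ G.neighborSet x ∩ E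
  let s : Set V := {x ∈ W \ E | N x ⊆ N b}
  let C : Set V := {x | (G.induce s).spanningCoe.Reachable b x}
  have hbs : b ∈ s := ⟨hb.1, subset_rfl⟩
  suffices hc : c ∈ C from (mem_of_reachable_spanningCoe_induce hbs hc).2
  by_contra hc
  obtain ⟨p⟩ := hbc
  obtain ⟨⟨⟨x, v⟩, hxv⟩, -, hx : x ∈ C, hv : v ∉ C⟩ := p.exists_boundary_dart C .rfl hc
  obtain ⟨-, hvW, hxv⟩ := adj_spanningCoe_induce.1 hxv
  have hxs : x ∈ s := mem_of_reachable_spanningCoe_induce hbs hx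
  have hvN : ¬ N v ⊆ N b := fun hN ↦
    hv (hx.trans (adj_spanningCoe_induce.2 ⟨hxs, ⟨hvW, hN⟩, hxv⟩).reachable)
  obtain ⟨e, ⟨hve, heE⟩, heb⟩ := Set.not_subset.1 hvN
  have hbv : (G.induce (insert v s)).spanningCoe.Reachable b v := by
    refine (hx.mono fun y z hyz ↦ ?_).trans
      (adj_spanningCoe_induce.2 ⟨.inr hxs, .inl rfl, hxv⟩).reachable
    rw [adj_spanningCoe_induce] at hyz ⊢
    exact ⟨.inr hyz.1, .inr hyz.2.1, hyz.2.2⟩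
  have hsub : insert v s ⊆ W \ E := Set.insert_subset hvW fun y hy ↦ hy.1
  refine hvN (hb.2 hvW fun f ⟨hbf, hfE⟩ ↦ ⟨?_, hfE⟩)
  refine (h.nonCoverGraph_adj_of_reachable htf hm ?_ (.inr hbs) hbv hbf.symm hve ?_).symm
  · exact Set.disjoint_left.2 fun z hz hzs ↦
      (hsub hzs).2 (hE.2 f hfE e heE ⟨hz, (hsub hzs).1⟩)
  · rintro y (rfl | hy) hye
    · rfl
    · exact absurd (hy.2 ⟨hye, heE⟩) heb

lemma AxTB'.subset_of_not_reachable (h : AxTB' R) (htf : IsTransit R) (hm : IsMonotone R)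
    (hE : IsProperConvexIn R W E) {b x z : V}
    (hb : MaximalFor (· ∈ W \ E) (fun x ↦ (nonCoverGraph R W).neighborSet x ∩ E) b)
    (hbx : ((nonCoverGraph R W).induce (W \ E)).spanningCoe.Reachable b x) (hz : z ∈ W)
    (hbz : ¬ ((nonCoverGraph R W).induce (W \ E)).spanningCoe.Reachable b z)
    (hzb : z ∉ (nonCoverGraph R W).neighborSet b ∩ E) : W ⊆ R x z := by
  by_contra hxz
  have hadj : (nonCoverGraph R W).Adj x z :=
    (nonCoverGraph_adj htf).2 ⟨fun e ↦ hbz (e ▸ hbx), hxz⟩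
  by_cases hzE : z ∈ E
  · exact hzb (h.neighborSet_inter_subset htf hm hE hb hbx ⟨hadj, hzE⟩)
  · have hx : x ∈ W \ E := mem_of_reachable_spanningCoe_induce hb.1 hbx
    exact hbz (hbx.trans (adj_spanningCoe_induce.2 ⟨hx, ⟨hz, hzE⟩, hadj⟩).reachable)

lemma AxTB'.exists_isSimpleIn_notMem_of_maximal (h : AxTB' R) (htf : IsTransit R)
    (hm : IsMonotone R) (hW : W.Finite) (hE : Maximal (IsProperConvexIn R W) E)
    (ih : ∀ W' ⊂ W, ∀ E', IsProperConvexIn R W' E' → ∃ x ∈ W' \ E', IsSimpleIn R W' x) :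
    ∃ x ∈ W \ E, IsSimpleIn R W x := by
  have hdiff : (W \ E).Nonempty := Set.sdiff_nonempty.2 hE.1.1.2
  rcases E.eq_empty_or_nonempty with rfl | hne
  · obtain ⟨b, hb⟩ := hdiff
    have hWb : W ⊆ {b} := htf.self_eq b ▸
      subset_of_maximal_isProperConvexIn hm hE hb (Set.empty_subset _) (htf.left_mem b b)
    exact ⟨b, hb, fun u hu v _ ↦ .inl (hWb hu ▸ htf.left_mem b v)⟩
  obtain ⟨b, hb⟩ := hW.sdiff.exists_maximalFor
    (fun x ↦ (nonCoverGraph R W).neighborSet x ∩ E) (W \ E) hdiff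
  let S : Set V := (nonCoverGraph R W).neighborSet b ∩ E
  let B : Set V := {c | ((nonCoverGraph R W).induce (W \ E)).spanningCoe.Reachable b c}
  have hBW : B ⊆ W \ E := fun c hc ↦ mem_of_reachable_spanningCoe_induce hb.1 hc
  have hSE : S ⊆ E := Set.inter_subset_right
  have hsub : B ∪ S ⊆ W := Set.union_subset (hBW.trans Set.sdiff_subset) (hSE.trans hE.1.1.1)
  have hssub : B ∪ S ⊂ W := by
    obtain ⟨e, he, hbe⟩ := h.exists_cover_of_maximal htf hm (hW.subset hE.1.1.1) hne hE hb.1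
    refine hsub.ssubset_of_mem_notMem (hE.1.1.1 he) ?_
    rintro (heB | heS)
    · exact (hBW heB).2 he
    · exact ((nonCoverGraph_adj htf).1 heS.1).2 hbe
  have hconvex : IsProperConvexIn R (B ∪ S) S := by
    refine ⟨Set.subset_union_right.ssubset_of_mem_notMem (.inl .rfl : b ∈ B ∪ S)
      fun hbS ↦ hb.1.2 hbS.2, fun p hp q hq z hz ↦ hz.2.resolve_left fun hzB ↦ ?_⟩
    exact (hBW hzB).2 (hE.1.2 p hp.2 q hq.2 ⟨hz.1, (hBW hzB).1⟩)
  obtain ⟨x, hx, hsimple⟩ := ih _ hssub _ hconvex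
  have hxB : x ∈ B := hx.1.resolve_right hx.2
  refine ⟨x, hBW hxB, hsimple.of_subset fun z hz ↦ ?_⟩
  exact h.subset_of_not_reachable htf hm hE.1 hb hxB hz.1
    (fun hzB ↦ hz.2 (.inl hzB)) (fun hzS ↦ hz.2 (.inr hzS))

lemma AxTB'.exists_isSimpleIn_notMem (h : AxTB' R) (htf : IsTransit R) (hm : IsMonotone R)
    (hW : W.Finite) (hE : IsProperConvexIn R W E) : ∃ x ∈ W \ E, IsSimpleIn R W x := by
  induction hn : W.ncard using Nat.strong_induction_on generalizing W E with
  | _ n ih =>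
  subst hn
  obtain ⟨M, hEM, hM⟩ := (hW.finite_subsets.subset
    fun E' (hE' : IsProperConvexIn R W E') ↦ hE'.1.1).exists_le_maximal hE
  obtain ⟨x, hx, hsimple⟩ := h.exists_isSimpleIn_notMem_of_maximal htf hm hW hM
    fun W' hW' E' hE' ↦ ih _ (Set.ncard_lt_ncard hW' hW) (hW.subset hW'.subset) hE' rfl
  exact ⟨x, ⟨hx.1, fun hxE ↦ hx.2 (hEM hxE)⟩, hsimple⟩

/-! ### The equivalences -/

lemma AxTB'.axHC (h : AxTB' R) (htf : IsTransit R) (hm : IsMonotone R) : AxHC R := by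
  intro W hW
  have hempty : IsProperConvexIn R W ∅ :=
    ⟨Set.empty_ssubset.2 (Finset.card_pos.1 (by omega)), by simp⟩
  obtain ⟨x, hx, hxsimple⟩ := h.exists_isSimpleIn_notMem htf hm W.finite_toSet hempty
  have hsingleton : IsProperConvexIn R W {x} := by
    refine ⟨⟨Set.singleton_subset_iff.2 hx.1, fun hsub ↦ ?_⟩, ?_⟩
    · have hcard := Finset.card_le_card (Finset.coe_subset.1 (Finset.coe_singleton x ▸ hsub))
      rw [Finset.card_singleton] at hcard
      omega
    · intro p hp q hq
      rw [Set.eq_of_mem_singleton hp, Set.eq_of_mem_singleton hq, htf.self_eq]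
      exact Set.inter_subset_left
  obtain ⟨y, hy, hysimple⟩ := h.exists_isSimpleIn_notMem htf hm W.finite_toSet hsingleton
  exact ⟨x, hx.1, y, hy.1, fun e ↦ hy.2 e.symm, fun u hu v hv ↦
    ⟨hxsimple.subset_or_subset htf hm hu hv, hysimple.subset_or_subset htf hm hu hv⟩⟩

lemma AxHC.axTB (h : AxHC R) : AxTB R := by
  intro W hW
  obtain ⟨x, hx, _, _, _, hchain⟩ := h W hW
  exact ⟨x, hx, fun u hu v hv ↦ (hchain u hu v hv).1⟩

lemma AxTB.axTB' (h : AxTB R) (htf : IsTransit R) : AxTB' R := by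
  classical
  intro n hn v hv
  have : NeZero n := ⟨by omega⟩
  have hcard : 3 ≤ (Finset.univ.image v).card := by
    refine Finset.two_lt_card.2 ⟨v (0 - 1), by simp, v 0, by simp, v (0 + 1), by simp, ?_, ?_, ?_⟩
    · exact fun e ↦ (hv 0).1 (e ▸ htf.left_mem _ _)
    · exact fun e ↦ (hv 0).1 (e ▸ htf.right_mem _ _)
    · exact fun e ↦ (hv 0).2 (e ▸ htf.right_mem _ _)
  obtain ⟨x, hx, hchain⟩ := h _ hcard
  obtain ⟨k, -, rfl⟩ := Finset.mem_image.1 hx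
  rcases hchain (v (k - 1)) (by simp) (v (k + 1)) (by simp) with hsub | hsub
  · exact absurd (hsub (htf.right_mem _ _)) (hv k).1
  · exact absurd (htf.symm _ _ ▸ hsub (htf.right_mem _ _)) (hv k).2

lemma AxTB'.totallyBalanced_transitSets (h : AxTB' R) (hm : IsMonotone R) :
    TotallyBalanced (transitSets R) := by
  rintro ⟨n, hn, C, x, hC, hx, hxC⟩
  obtain ⟨j, i, hij, hij', hmem⟩ := h.exists_mem hn x
  refine hxC j (i + 1) (by grind) (by grind) ?_
  obtain ⟨p, q, hpq⟩ := hC (i + 1)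
  have hleft : x i ∈ R p q := hpq ▸ (hx i).2
  have hright : x (i + 1) ∈ R p q := hpq ▸ (hx (i + 1)).1
  exact hpq ▸ hm p q _ _ hleft hright hmem

lemma axTB'_of_totallyBalanced_transitSets (htf : IsTransit R)
    (h : TotallyBalanced (transitSets R)) : AxTB' R := by
  intro n hn v _
  by_contra! hc
  refine h ⟨n, hn, fun i ↦ R (v (i - 1)) (v i), v, fun i ↦ ⟨_, _, rfl⟩,
    fun i ↦ ⟨htf.right_mem _ _, ?_⟩, fun i k hki hki' ↦ ?_⟩
  · simpa only [add_sub_cancel_right] using htf.left_mem (v i) (v (i + 1))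
  · simpa only [sub_add_cancel] using hc i (k - 1) (by grind) (by grind)

theorem stmt_3_general {V : Type*} (R : V → V → Set V) (htf : IsTransit R) (hm : IsMonotone R) :
    [AxTB R, AxHC R, AxTB' R, TotallyBalanced (transitSets R)].TFAE := by
  tfae_have 1 → 3 := fun h ↦ h.axTB' htf
  tfae_have 3 → 2 := fun h ↦ h.axHC htf hm
  tfae_have 2 → 1 := AxHC.axTB
  tfae_have 3 → 4 := fun h ↦ h.totallyBalanced_transitSets hm
  tfae_have 4 → 3 := axTB'_of_totallyBalanced_transitSets htf
  tfae_finish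

/-- For a monotone transit function, (tb), (hc), (tb') and total
balancedness of the transit sets are equivalent. -/
theorem stmt_3 {V : Type*} [Fintype V] [Nonempty V] (R : V → V → Set V)
    (htf : IsTransit R) (hm : IsMonotone R) :
    [AxTB R, AxHC R, AxTB' R, TotallyBalanced (transitSets R)].TFAE :=
  stmt_3_general R htf hm

end TransitPaper
end

section
/- Let 𝒞 be a set system on a finite nonempty set V satisfying axiom (WP). Then 𝒞 satisfies axiom (I). -/
namespace TransitPaper

variable {V : Type*}

theorem le_of_inf_le_of_le_sup {α : Type*} [DistribLattice α] {a b c : α}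
    (hinf : a ⊓ b ≤ c) (hsup : a ≤ b ⊔ c) : a ≤ c :=
  le_of_inf_le_sup_le (z := b) (le_inf hinf inf_le_right)
    (sup_le (hsup.trans_eq (sup_comm b c)) le_sup_right)

theorem stmt_9_general {𝒞 : Set (Set V)} (hwp : AxWPSet 𝒞) : AxISet 𝒞 := by
  intro A hA B hB C hC hAB hABC hCAB
  have hAC : (A ∩ C).Nonempty := hAB.mono (Set.subset_inter Set.inter_subset_left hABC)
  have hBC : (B ∩ C).Nonempty := hAB.mono (Set.subset_inter Set.inter_subset_right hABC)
  have hC_not_subset : ¬ C ⊆ A ∪ B := Set.sdiff_nonempty.mp hCAB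
  rcases hwp A hA B hB C hC hAB hAC hBC with hA_subset | hB_subset | hC_subset
  · exact Or.inl (le_of_inf_le_of_le_sup hABC hA_subset)
  · have hBAC : B ∩ A ⊆ C := Set.inter_comm A B ▸ hABC
    exact Or.inr (le_of_inf_le_of_le_sup hBAC hB_subset)
  · exact absurd hC_subset hC_not_subset

/-- A set system satisfying (WP) satisfies (I). -/
theorem stmt_9 {V : Type*} [Fintype V] [Nonempty V] (𝒞 : Set (Set V))
    (hne : ∀ C ∈ 𝒞, C.Nonempty) (hwp : AxWPSet 𝒞) :
    AxISet 𝒞 :=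
  stmt_9_general hwp

end TransitPaper
end
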